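/- arXiv:1703.09904 — 9 statements merged into one kernel-verified Lean document; each statement's English description precedes it below -/
import Mathlib

section
/- Let 1 ≤ n ≤ l and let σ be a permutation of Fin n. Then the set Y_σ = {P : Fin n → Fin l | P(σ(1)) ≤ P(σ(2)) ≤ … ≤ P(σ(n))} is an irreducible algebraic set. -/
/-- The solution set of the equation given by the pair (A, B) of nonempty subsets of `Fin n`:
points `P : Fin n → Fin l` with `min_{i ∈ A} P i = min_{j ∈ B} P j`. -/
def solutionSet {n : ℕ} (l : ℕ) (A B : Finset (Fin n)) (hA : A.Nonempty) (hB : B.Nonempty) :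
    Set (Fin n → Fin l) :=
  {P | A.inf' hA P = B.inf' hB P}

/-- A set of points is algebraic if it is the intersection of the solution sets of some
family of equations (pairs of nonempty subsets of `Fin n`). -/
def IsAlgebraicSet (n l : ℕ) (Y : Set (Fin n → Fin l)) : Prop :=
  ∃ (I : Type) (A B : I → Finset (Fin n)) (hA : ∀ i, (A i).Nonempty)
    (hB : ∀ i, (B i).Nonempty), Y = ⋂ i, solutionSet l (A i) (B i) (hA i) (hB i)

/-- An algebraic set `Y` is irreducible if whenever `Y = Y₁ ∪ … ∪ Yₘ` with each `Yᵢ`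
algebraic, then `Y = Yᵢ` for some `i`. -/
def IsIrreducibleAlg (n l : ℕ) (Y : Set (Fin n → Fin l)) : Prop :=
  ∀ (m : ℕ) (Z : Fin m → Set (Fin n → Fin l)),
    (∀ i, IsAlgebraicSet n l (Z i)) → Y = ⋃ i, Z i → ∃ i, Y = Z i

/-- Let 1 ≤ n ≤ l and let σ be a permutation of `Fin n`. Then the set
`Y_σ = {P : Fin n → Fin l | P(σ(1)) ≤ P(σ(2)) ≤ … ≤ P(σ(n))}` is an irreducible
algebraic set. -/
theorem stmt_4 (n l : ℕ) (hn : 1 ≤ n) (hnl : n ≤ l) (σ : Equiv.Perm (Fin n)) :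
    IsAlgebraicSet n l {P : Fin n → Fin l | Monotone fun i => P (σ i)} ∧
    IsIrreducibleAlg n l {P : Fin n → Fin l | Monotone fun i => P (σ i)} := by
  have key : ∀ (k : ℕ) (g : Fin n → Fin k), Monotone g → ∀ (A : Finset (Fin n))
      (hA : A.Nonempty), A.inf' hA (g ∘ σ.symm) = g (A.inf' hA σ.symm) := by
    intro k g hg A hA
    exact (Finset.apply_inf'_eq_inf'_comp hA (f := σ.symm) g (fun x y => hg.map_inf x y)).symm
  constructor
  · refine ⟨{p : Fin n × Fin n // p.1 ≤ p.2}, fun p => {σ p.1.1, σ p.1.2}, fun p => {σ p.1.1},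
      fun p => by simp, fun p => by simp, ?_⟩
    ext P
    simp only [Set.mem_ofPred_eq, Set.mem_iInter, solutionSet]
    constructor
    · rintro h ⟨⟨a, b⟩, hab⟩
      have := h hab
      simpa [Finset.inf'_insert] using this
    · intro h a b hab
      have := h ⟨⟨a, b⟩, hab⟩
      simpa [Finset.inf'_insert] using this
  · intro m Z hZ hY
    have h0 : ((Fin.castLE hnl) ∘ σ.symm : Fin n → Fin l) ∈ ⋃ i, Z i := by
      rw [← hY]
      intro a b hab
      simpa using hab
    obtain ⟨i, hi⟩ := Set.mem_iUnion.1 h0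
    refine ⟨i, Set.Subset.antisymm ?_ ?_⟩
    · intro P hP
      obtain ⟨I, A, B, hA, hB, hE⟩ := hZ i
      rw [hE] at hi ⊢
      simp only [Set.mem_iInter, solutionSet, Set.mem_ofPred_eq] at hi ⊢
      intro j
      have h1 := hi j
      rw [key l _ (Fin.strictMono_castLE hnl).monotone, key l _ (Fin.strictMono_castLE hnl).monotone]
        at h1
      have h2 := Fin.castLE_injective hnl h1
      have h3 : P = (fun i => P (σ i)) ∘ σ.symm := by
        ext x
        simp
      rw [h3, key l _ hP, key l _ hP, h2]
    · rw [hY]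
      exact Set.subset_iUnion Z i
end

section
/- Let 2 ≤ n ≤ l and let σ be a permutation of Fin n. Then the set Y_σ = {P : Fin n → Fin l | P(σ(1)) = P(σ(2)) ≤ P(σ(3)) ≤ … ≤ P(σ(n))} is an irreducible algebraic set. -/
/-- Let 2 ≤ n ≤ l and let σ be a permutation of `Fin n`. Then the set
`Y_σ = {P : Fin n → Fin l | P(σ(1)) = P(σ(2)) ≤ P(σ(3)) ≤ … ≤ P(σ(n))}` is an irreducible
algebraic set.  (Positions 1 and 2 are the indices `0, 1 : Fin n`; since the chain of
inequalities is equivalent to monotonicity of `P ∘ σ`, the set is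
`{P | P (σ 0) = P (σ 1) ∧ Monotone (fun i => P (σ i))}`.) -/
theorem stmt_5 (n l : ℕ) [NeZero n] (hn : 2 ≤ n) (hnl : n ≤ l) (σ : Equiv.Perm (Fin n)) :
    IsAlgebraicSet n l
      {P : Fin n → Fin l | P (σ 0) = P (σ 1) ∧ Monotone fun i => P (σ i)} ∧
    IsIrreducibleAlg n l
      {P : Fin n → Fin l | P (σ 0) = P (σ 1) ∧ Monotone fun i => P (σ i)} := by
  have v1 : ((1 : Fin n) : ℕ) = 1 := by
    rw [Fin.val_one']
    exact Nat.mod_eq_of_lt hn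
  refine ⟨⟨Option {p : Fin n × Fin n // p.1 ≤ p.2},
    fun o => o.elim {σ 0} (fun p => {σ p.1.1, σ p.1.2}),
    fun o => o.elim {σ 1} (fun p => {σ p.1.1}), ?_, ?_, ?_⟩, ?_⟩
  · rintro (_ | p) <;> simp
  · rintro (_ | p) <;> simp
  · ext P
    simp only [Set.mem_ofPred_eq, Set.mem_iInter, solutionSet]
    constructor
    · rintro ⟨h1, h2⟩ (_ | ⟨⟨i, j⟩, hij⟩)
      · simpa using h1
      · have := h2 hij
        simpa [Finset.inf'_insert] using this
    · intro h
      refine ⟨by simpa using h none, fun i j hij => ?_⟩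
      have := h (some ⟨(i, j), hij⟩)
      simpa [Finset.inf'_insert] using this
  · intro m Z hZ hY
    let P0 : Fin n → Fin l := fun k => ⟨(σ.symm k : ℕ) - 1, by have := (σ.symm k).2; omega⟩
    have hP0 : P0 ∈ {P : Fin n → Fin l | P (σ 0) = P (σ 1) ∧ Monotone fun i => P (σ i)} := by
      refine ⟨?_, fun i j hij => ?_⟩
      · simp [P0, Fin.ext_iff, Nat.mod_eq_of_lt (show 1 < n from hn)]
      · have h : (i : ℕ) ≤ j := hij
        simp only [P0, Equiv.symm_apply_apply, Fin.mk_le_mk]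
        omega
    rw [hY] at hP0
    obtain ⟨i, hi⟩ := Set.mem_iUnion.1 hP0
    refine ⟨i, Set.Subset.antisymm ?_ ?_⟩
    · rintro Q ⟨hQ1, hQ2⟩
      obtain ⟨I, A, B, hA, hB, hE⟩ := hZ i
      rw [hE] at hi ⊢
      let f : Fin l → Fin l := fun v => Q (σ ⟨min (v + 1) (n - 1), by omega⟩)
      have hf : Monotone f := by
        intro v w hvw
        have h : (v : ℕ) ≤ w := hvw
        apply hQ2
        simp only [Fin.mk_le_mk]
        omega
      have hfQ : Q = f ∘ P0 := by
        funext k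
        obtain ⟨j, rfl⟩ := σ.surjective k
        simp only [f, P0, Function.comp, Equiv.symm_apply_apply]
        by_cases hj : j = 0
        · subst hj
          rw [hQ1]
          congr 2
          apply Fin.ext
          simp only [v1, Fin.val_zero]
          omega
        · have : (j : ℕ) ≠ 0 := fun h => hj (Fin.ext (by simpa using h))
          congr 2
          apply Fin.ext
          have := j.2
          simp only
          omega
      have key : ∀ (C : Finset (Fin n)) (hC : C.Nonempty), C.inf' hC Q = f (C.inf' hC P0) := by
        intro C hC
        rw [hfQ, Finset.apply_inf'_eq_inf'_comp hC f (fun x y => hf.map_min)]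
      simp only [Set.mem_iInter, solutionSet, Set.mem_ofPred_eq] at hi ⊢
      intro e
      rw [key, key, hi e]
    · rw [hY]
      exact Set.subset_iUnion Z i
end

section
/- Let n, l ≥ 1 and let (A, B) be a pair of nonempty subsets of Fin n with A ∪ B = Fin n. Then the solution set V(A,B) = {P : Fin n → Fin l | min_{i∈A} P(i) = min_{j∈B} P(j)} equals the union, over all permutations σ of Fin n of the first kind, of the sets {P | P(σ(1)) ≤ P(σ(2)) ≤ … ≤ P(σ(n))}, together with the union, over all permutations σ of the second kind, of the sets {P | P(σ(1)) = P(σ(2)) ≤ P(σ(3)) ≤ … ≤ P(σ(n))}. -/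
/-- Sort `P` with ties at the minimum broken so that `b` comes first and `a` second. -/
theorem exists_sorting (n l : ℕ) [NeZero n] (P : Fin n → Fin l) (a b : Fin n)
    (hab : P a = P b) (hmin : ∀ i, P b ≤ P i) :
    ∃ σ : Equiv.Perm (Fin n), σ 0 = b ∧ (a ≠ b → σ 1 = a) ∧ Monotone fun i => P (σ i) := by
  let f : Fin n → ℕ := fun i => 3 * (P i : ℕ) + if i = b then 0 else if i = a then 1 else 2
  have hf : ∀ i, f i = 3 * (P i : ℕ) + if i = b then 0 else if i = a then 1 else 2 :=
    fun i => rfl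
  have hm : Monotone (f ∘ Tuple.sort f) := Tuple.monotone_sort f
  have hab' : (P a : ℕ) = P b := by rw [hab]
  have hmin' : ∀ i, (P b : ℕ) ≤ P i := fun i => hmin i
  generalize Tuple.sort f = σ at hm
  have h0 : σ 0 = b := by
    have h := hm (Fin.zero_le (σ.symm b))
    simp only [Function.comp, Equiv.apply_symm_apply, hf] at h
    have := hmin' (σ 0)
    by_contra hne
    simp only [if_neg hne, if_true] at h
    split_ifs at h <;> omega
  refine ⟨σ, h0, ?_, ?_⟩
  · intro hne
    have hs : σ.symm a ≠ 0 := by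
      intro h
      apply hne
      rw [← h0, ← h, Equiv.apply_symm_apply]
    have hs' : (σ.symm a : ℕ) ≠ 0 := fun h => hs (Fin.ext (by simpa using h))
    have hlt := (σ.symm a).isLt
    have h1v : ((1 : Fin n) : ℕ) = 1 := by
      rw [Fin.val_one', Nat.mod_eq_of_lt]; omega
    have h1 : (1 : Fin n) ≤ σ.symm a := by
      rw [Fin.le_def, h1v]; omega
    have h10 : σ 1 ≠ b := by
      rw [← h0]
      intro h
      have := congrArg Fin.val (σ.injective h)
      rw [h1v] at this
      simp at this
    have h := hm h1
    simp only [Function.comp, Equiv.apply_symm_apply, hf] at h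
    have := hmin' (σ 1)
    by_contra hc
    simp only [if_neg hc, if_neg h10, if_neg hne, if_true] at h
    omega
  · intro i j hij
    have h := hm hij
    simp only [Function.comp, hf] at h
    change (P (σ i) : ℕ) ≤ P (σ j)
    split_ifs at h <;> omega

/-- Let n, l ≥ 1 and let (A, B) be a pair of nonempty subsets of `Fin n` with
`A ∪ B = Fin n`. Then the solution set
`V(A,B) = {P : Fin n → Fin l | min_{i∈A} P i = min_{j∈B} P j}` equals the union, over all
permutations σ of `Fin n` of the first kind (`σ(1) ∈ A ∩ B`), of the sets
`{P | P(σ(1)) ≤ … ≤ P(σ(n))}`, together with the union, over all permutations σ of the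
second kind (`σ(1) ∈ B \ A`, `σ(2) ∈ A \ B`), of the sets
`{P | P(σ(1)) = P(σ(2)) ≤ P(σ(3)) ≤ … ≤ P(σ(n))}`.
(Positions 1 and 2 are the indices `0, 1 : Fin n`.) -/
theorem stmt_6 (n l : ℕ) [NeZero n] (hn : 1 ≤ n) (hl : 1 ≤ l) (A B : Finset (Fin n))
    (hA : A.Nonempty) (hB : B.Nonempty) (hAB : A ∪ B = Finset.univ) :
    {P : Fin n → Fin l | A.inf' hA P = B.inf' hB P} =
      (⋃ σ : Equiv.Perm (Fin n), ⋃ (_ : σ 0 ∈ A ∩ B),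
        {P : Fin n → Fin l | Monotone fun i => P (σ i)}) ∪
      (⋃ σ : Equiv.Perm (Fin n), ⋃ (_ : σ 0 ∈ B \ A ∧ σ 1 ∈ A \ B),
        {P : Fin n → Fin l | P (σ 0) = P (σ 1) ∧ Monotone fun i => P (σ i)}) := by
  have key : ∀ (P : Fin n → Fin l) (S : Finset (Fin n)) (hS : S.Nonempty) (x : Fin n),
      x ∈ S → (∀ i, P x ≤ P i) → S.inf' hS P = P x := fun P S hS x hx h =>
    le_antisymm (Finset.inf'_le _ hx) (Finset.le_inf' _ _ fun i _ => h i)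
  ext P
  simp only [Set.mem_setOf_eq, Set.mem_union, Set.mem_iUnion, exists_prop]
  constructor
  · intro h
    obtain ⟨a, ha, hPa⟩ := Finset.exists_mem_eq_inf' hA P
    obtain ⟨b, hb, hPb⟩ := Finset.exists_mem_eq_inf' hB P
    have hab : P a = P b := by rw [← hPa, ← hPb, h]
    have hmin : ∀ i, P b ≤ P i := by
      intro i
      have hi : i ∈ A ∪ B := by rw [hAB]; exact Finset.mem_univ i
      rcases Finset.mem_union.1 hi with hi | hi
      · rw [← hab, ← hPa]; exact Finset.inf'_le _ hi
      · rw [← hPb]; exact Finset.inf'_le _ hi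
    by_cases haB : a ∈ B
    · obtain ⟨σ, h0, -, hm⟩ := exists_sorting n l P a a rfl (fun i => hab ▸ hmin i)
      exact Or.inl ⟨σ, by rw [h0]; exact Finset.mem_inter.2 ⟨ha, haB⟩, hm⟩
    obtain ⟨σ, h0, h1, hm⟩ := exists_sorting n l P a b hab hmin
    by_cases hbA : b ∈ A
    · exact Or.inl ⟨σ, by rw [h0]; exact Finset.mem_inter.2 ⟨hbA, hb⟩, hm⟩
    have h1 := h1 (fun h => haB (h ▸ hb))
    refine Or.inr ⟨σ, ?_, ?_, hm⟩
    · rw [h0, h1]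
      exact ⟨Finset.mem_sdiff.2 ⟨hb, hbA⟩, Finset.mem_sdiff.2 ⟨ha, haB⟩⟩
    · rw [h0, h1, hab]
  · have hz : ∀ σ : Equiv.Perm (Fin n), (Monotone fun i => P (σ i)) → ∀ i, P (σ 0) ≤ P i := by
      intro σ hm i
      simpa using hm (Fin.zero_le (σ.symm i))
    rintro (⟨σ, h0, hm⟩ | ⟨σ, ⟨h0, h1⟩, he, hm⟩)
    · rw [Finset.mem_inter] at h0
      rw [key P A hA _ h0.1 (hz σ hm), key P B hB _ h0.2 (hz σ hm)]
    · rw [Finset.mem_sdiff] at h0 h1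
      rw [key P A hA _ h1.1 (fun i => he ▸ hz σ hm i), key P B hB _ h0.1 (hz σ hm), he]
end

section
/- Let 1 ≤ n ≤ l, let (A, B) be a pair of nonempty subsets of Fin n with A ∪ B = Fin n, and let σ, σ′ be two distinct permutations of Fin n, each of the first or second kind with respect to (A, B). Then Y_σ is not a subset of Y_{σ′}. -/
/-- The set `Y_σ` for a permutation σ of the first kind:
`{P | P(σ(1)) ≤ P(σ(2)) ≤ … ≤ P(σ(n))}`. -/
def chainSet (n l : ℕ) (σ : Equiv.Perm (Fin n)) : Set (Fin n → Fin l) :=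
  {P | Monotone fun i => P (σ i)}

/-- The set `Y_σ` for a permutation σ of the second kind:
`{P | P(σ(1)) = P(σ(2)) ≤ P(σ(3)) ≤ … ≤ P(σ(n))}`. -/
def eqChainSet (n l : ℕ) [NeZero n] (σ : Equiv.Perm (Fin n)) : Set (Fin n → Fin l) :=
  {P | P (σ 0) = P (σ 1) ∧ Monotone fun i => P (σ i)}

/-- The set `Y_σ` attached to a permutation σ (of the first or second kind) with respect to
the equation (A, B): the chain set if σ is of the first kind (`σ(1) ∈ A ∩ B`), and the
equality-chain set otherwise. -/
def permSet (n l : ℕ) [NeZero n] (A B : Finset (Fin n)) (σ : Equiv.Perm (Fin n)) :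
    Set (Fin n → Fin l) :=
  if σ 0 ∈ A ∩ B then chainSet n l σ else eqChainSet n l σ

lemma perm_eq_of_mono {n : ℕ} (σ σ' : Equiv.Perm (Fin n))
    (h : Monotone fun i => σ.symm (σ' i)) : σ = σ' := by
  have hs : StrictMono fun i => σ.symm (σ' i) :=
    h.strictMono_of_injective (σ.symm.injective.comp σ'.injective)
  have h2 := (StrictMono.range_inj hs (strictMono_id (α := Fin n))).1 (by
    have : Function.Surjective fun i => σ.symm (σ' i) := σ.symm.surjective.comp σ'.surjective
    rw [this.range_eq, Set.range_id])
  ext1 i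
  have := congrFun h2 i
  simp only [id] at this
  exact ((Equiv.symm_apply_eq σ).1 this).symm

lemma permSet_mono {n l : ℕ} [NeZero n] {A B : Finset (Fin n)} {σ : Equiv.Perm (Fin n)}
    {P : Fin n → Fin l} (h : P ∈ permSet n l A B σ) : Monotone fun i => P (σ i) := by
  unfold permSet at h
  split_ifs at h
  · exact h
  · exact h.2

/-- Let 1 ≤ n ≤ l, let (A, B) be a pair of nonempty subsets of `Fin n` with
`A ∪ B = Fin n`, and let σ, σ′ be two distinct permutations of `Fin n`, each of the first or
second kind with respect to (A, B). Then `Y_σ` is not a subset of `Y_σ′`. -/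
theorem stmt_7 (n l : ℕ) [NeZero n] (hn : 1 ≤ n) (hnl : n ≤ l) (A B : Finset (Fin n))
    (hA : A.Nonempty) (hB : B.Nonempty) (hAB : A ∪ B = Finset.univ)
    (σ σ' : Equiv.Perm (Fin n)) (hne : σ ≠ σ')
    (hσ : σ 0 ∈ A ∩ B ∨ (σ 0 ∈ B \ A ∧ σ 1 ∈ A \ B))
    (hσ' : σ' 0 ∈ A ∩ B ∨ (σ' 0 ∈ B \ A ∧ σ' 1 ∈ A \ B)) :
    ¬ permSet n l A B σ ⊆ permSet n l A B σ' := by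
  intro hsub
  rcases hσ with h1 | ⟨h1, h2⟩
  · have hP : (fun x => Fin.castLE hnl (σ.symm x)) ∈ permSet n l A B σ := by
      rw [permSet, if_pos h1]
      intro i j hij
      simpa using hij
    have hm := permSet_mono (hsub hP)
    refine hne (perm_eq_of_mono σ σ' fun i j hij => ?_)
    have := hm hij
    simpa using this
  · have h0 : σ 0 ∉ A ∩ B := by
      simp only [Finset.mem_sdiff, Finset.mem_inter] at *; tauto
    have h01 : (0 : Fin n) ≠ 1 := by
      intro h
      rw [← h] at h2
      simp only [Finset.mem_sdiff] at *; tauto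
    have hn2 : 2 ≤ n := by
      by_contra hc
      have : n = 1 := by omega
      subst this
      exact h01 (Subsingleton.elim _ _)
    have hv0 : ((0 : Fin n) : ℕ) = 0 := by simp
    have hv1 : ((1 : Fin n) : ℕ) = 1 := by
      rw [Fin.val_one', Nat.mod_eq_of_lt (by omega)]
    have hP : (fun x => (⟨(σ.symm x : ℕ) - 1, by omega⟩ : Fin l)) ∈ permSet n l A B σ := by
      rw [permSet, if_neg h0]
      refine ⟨?_, ?_⟩
      · simp only [Equiv.symm_apply_apply, hv1, hv0]
      · intro i j hij
        simp only [Equiv.symm_apply_apply, Fin.mk_le_mk]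
        have : (i : ℕ) ≤ j := hij
        omega
    have hm := permSet_mono (hsub hP)
    have hm' : ∀ i j, i ≤ j → (σ.symm (σ' i) : ℕ) - 1 ≤ (σ.symm (σ' j) : ℕ) - 1 :=
      fun i j hij => hm hij
    have hf0 : σ.symm (σ' 0) = 0 := by
      have ha := hm' 0 (σ'.symm (σ 0)) (Fin.zero_le _)
      simp only [Equiv.apply_symm_apply, Equiv.symm_apply_apply, hv0] at ha
      by_contra hc
      have hc' : (σ.symm (σ' 0) : ℕ) ≠ 0 := fun h => hc (Fin.ext (by rw [h, hv0]))
      have h3 : σ.symm (σ' 0) = 1 := Fin.ext (by omega)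
      have h4 : σ' 0 = σ 1 := by rw [← h3]; simp
      rw [h4] at hσ'
      simp only [Finset.mem_sdiff, Finset.mem_inter] at *; tauto
    refine hne (perm_eq_of_mono σ σ' fun i j hij => ?_)
    have hb := hm' i j hij
    show (σ.symm (σ' i) : ℕ) ≤ (σ.symm (σ' j) : ℕ)
    by_contra hc
    have h5 : σ.symm (σ' j) = σ.symm (σ' 0) := by
      rw [hf0]; exact Fin.ext (by omega)
    have h6 : j = 0 := σ'.injective (σ.symm.injective h5)
    have h7 : i = j := by
      rw [h6] at hij ⊢
      exact le_antisymm hij (Fin.zero_le _)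
    rw [h7] at hc
    exact hc le_rfl
end

section
/- Let 1 ≤ n ≤ l, let (A, B) be a pair of nonempty subsets of Fin n with A ∪ B = Fin n, and let σ be a permutation of Fin n of the first or second kind with respect to (A, B). Define the point P_σ : Fin n → Fin l by P_σ(σ(i)) = a_i for all i if σ is of the first kind, and by P_σ(σ(1)) = a_2 and P_σ(σ(i)) = a_i for 2 ≤ i ≤ n if σ is of the second kind. Then P_σ ∈ Y_σ, and P_σ ∉ Y_{σ′} for every permutation σ′ ≠ σ of the first or second kind. -/
lemma perm_eq_of_monotone {n : ℕ} (σ σ' : Equiv.Perm (Fin n))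
    (h : Monotone fun i => σ.symm (σ' i)) : σ' = σ := by
  have hs : StrictMono fun i => σ.symm (σ' i) :=
    h.strictMono_of_injective (σ.symm.injective.comp σ'.injective)
  have hr : Set.range (fun i => σ.symm (σ' i)) = Set.range (id : Fin n → Fin n) := by
    rw [Set.range_id]
    exact (σ.symm.surjective.comp σ'.surjective).range_eq
  have := (StrictMono.range_inj hs strictMono_id).1 hr
  ext1 i
  have h2 := congrFun this i
  simpa using congrArg σ h2

/-- Let 1 ≤ n ≤ l, let (A, B) be a pair of nonempty subsets of `Fin n` with
`A ∪ B = Fin n`, and let σ be a permutation of `Fin n` of the first or second kind with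
respect to (A, B). Define the point `P_σ : Fin n → Fin l` by `P_σ(σ(i)) = a_i` for all i if
σ is of the first kind, and by `P_σ(σ(1)) = a_2` and `P_σ(σ(i)) = a_i` for 2 ≤ i ≤ n if σ is
of the second kind. Then `P_σ ∈ Y_σ`, and `P_σ ∉ Y_σ′` for every permutation σ′ ≠ σ of the
first or second kind.
(Position i ∈ {1,…,n} is the index `i−1 : Fin n`, and `a_i`, the i-th smallest element of
`Fin l`, is `Fin.castLE hnl (i−1)`; so the defining conditions read
`P (σ j) = Fin.castLE hnl j` for all j in the first case, and `P (σ 0) = P (σ 1)` together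
with `P (σ j) = Fin.castLE hnl j` for all `j ≠ 0` in the second case.) -/
theorem stmt_8 (n l : ℕ) [NeZero n] (hn : 1 ≤ n) (hnl : n ≤ l) (A B : Finset (Fin n))
    (hA : A.Nonempty) (hB : B.Nonempty) (hAB : A ∪ B = Finset.univ)
    (σ : Equiv.Perm (Fin n)) (P : Fin n → Fin l)
    (hP : (σ 0 ∈ A ∩ B ∧ ∀ i : Fin n, P (σ i) = Fin.castLE hnl i) ∨
          (σ 0 ∈ B \ A ∧ σ 1 ∈ A \ B ∧ P (σ 0) = P (σ 1) ∧
            ∀ i : Fin n, i ≠ 0 → P (σ i) = Fin.castLE hnl i)) :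
    P ∈ permSet n l A B σ ∧
    ∀ σ' : Equiv.Perm (Fin n), σ' ≠ σ →
      (σ' 0 ∈ A ∩ B ∨ (σ' 0 ∈ B \ A ∧ σ' 1 ∈ A \ B)) →
      P ∉ permSet n l A B σ' := by
  have hmono : ∀ τ : Equiv.Perm (Fin n), P ∈ permSet n l A B τ → Monotone fun i => P (τ i) := by
    intro τ h
    unfold permSet at h
    split_ifs at h
    · exact h
    · exact h.2
  rcases hP with ⟨h0, hP⟩ | ⟨h0, h1, h01, hP⟩
  · refine ⟨?_, ?_⟩
    · rw [permSet, if_pos h0]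
      intro i j hij
      simpa [hP] using hij
    · intro σ' hne _ hmem
      apply hne
      apply perm_eq_of_monotone
      intro i j hij
      have := hmono σ' hmem hij
      have e : ∀ x, P (σ' x) = Fin.castLE hnl (σ.symm (σ' x)) := by
        intro x
        rw [← hP, Equiv.apply_symm_apply]
      simpa [e] using this
  · have hne10 : (1 : Fin n) ≠ 0 := by
      intro h
      rw [h] at h1
      simp only [Finset.mem_sdiff] at h0 h1
      exact h0.2 h1.1
    have hone : ∀ j : Fin n, j ≠ 0 → 1 ≤ j := by
      intro j hj
      exact Fin.one_le_of_ne_zero hj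
    refine ⟨?_, ?_⟩
    · have : σ 0 ∉ A ∩ B := by
        simp only [Finset.mem_sdiff, Finset.mem_inter] at *
        tauto
      rw [permSet, if_neg this]
      refine ⟨h01, ?_⟩
      intro i j hij
      change P (σ i) ≤ P (σ j)
      by_cases hi : i = 0
      · subst hi
        by_cases hj : j = 0
        · rw [hj]
        · rw [h01, hP 1 hne10, hP j hj]
          simpa using hone j hj
      · have hj : j ≠ 0 := by
          rintro rfl
          exact hi (le_antisymm hij (Fin.zero_le _))
        rw [hP i hi, hP j hj]
        simpa using hij
    · intro σ' hne hk hmem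
      have hm := hmono σ' hmem
      apply hne
      have hle : P (σ' 0) ≤ P (σ 1) := by
        have := hm (Fin.zero_le (σ'.symm (σ 0)))
        simpa [h01] using this
      have hcase : σ' 0 = σ 0 ∨ σ' 0 = σ 1 := by
        obtain ⟨k, hk'⟩ := σ.surjective (σ' 0)
        rw [← hk'] at hle ⊢
        by_cases hk0 : k = 0
        · left; rw [hk0]
        · right
          rw [hP k hk0, hP 1 hne10] at hle
          have : k ≤ 1 := by simpa using hle
          rw [le_antisymm this (hone k hk0)]
      have h00 : σ' 0 = σ 0 := by
        rcases hcase with h | h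
        · exact h
        · exfalso
          rw [h] at hk
          simp only [Finset.mem_sdiff, Finset.mem_inter] at *
          tauto
      apply perm_eq_of_monotone
      intro i j hij
      change σ.symm (σ' i) ≤ σ.symm (σ' j)
      have e : ∀ x, x ≠ 0 → P (σ' x) = Fin.castLE hnl (σ.symm (σ' x)) := by
        intro x hx
        rw [← hP, Equiv.apply_symm_apply]
        intro h
        rw [Equiv.symm_apply_eq, ← h00] at h
        exact hx (σ'.injective h)
      by_cases hi : i = 0
      · rw [hi, h00, Equiv.symm_apply_apply]
        exact Fin.zero_le _
      · have hj : j ≠ 0 := by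
          rintro rfl
          exact hi (le_antisymm hij (Fin.zero_le _))
        have := hm hij
        simpa [e i hi, e j hj] using this
end

section
/- Let n, l ≥ 1. Every algebraic set Y ⊆ (Fin n → Fin l) is a finite union Y = Y_1 ∪ … ∪ Y_m of irreducible algebraic sets with Y_i ⊄ Y_j for all i ≠ j, and this decomposition is unique up to a permutation of the components: if Y = Z_1 ∪ … ∪ Z_k is another such union of irreducible algebraic sets pairwise not contained in one another, then {Z_1, …, Z_k} = {Y_1, …, Y_m} as sets of sets. -/
theorem IsAlgebraicSet.inter' {n l : ℕ} {X Y : Set (Fin n → Fin l)}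
    (hX : IsAlgebraicSet n l X) (hY : IsAlgebraicSet n l Y) : IsAlgebraicSet n l (X ∩ Y) := by
  obtain ⟨I, A, B, hA, hB, rfl⟩ := hX
  obtain ⟨J, C, D, hC, hD, rfl⟩ := hY
  refine ⟨I ⊕ J, Sum.elim A C, Sum.elim B D, ?_, ?_, ?_⟩
  · rintro (i | j)
    · exact hA i
    · exact hC j
  · rintro (i | j)
    · exact hB i
    · exact hD j
  · ext P
    simp only [Set.mem_inter_iff, Set.mem_iInter, Sum.forall]
    rfl

theorem IsIrreducibleAlg.exists_subset {n l : ℕ} {X : Set (Fin n → Fin l)}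
    (hX : IsAlgebraicSet n l X) (hi : IsIrreducibleAlg n l X) {k : ℕ}
    (Z : Fin k → Set (Fin n → Fin l)) (hZ : ∀ i, IsAlgebraicSet n l (Z i))
    (h : X ⊆ ⋃ i, Z i) : ∃ i, X ⊆ Z i := by
  obtain ⟨i, hi⟩ := hi k (fun i => X ∩ Z i) (fun i => hX.inter' (hZ i))
    (by rw [← Set.inter_iUnion]; exact (Set.inter_eq_left.2 h).symm)
  exact ⟨i, Set.inter_eq_left.1 hi.symm⟩

theorem exists_irreducible_mem {n l : ℕ} (Y : Set (Fin n → Fin l)) :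
    IsAlgebraicSet n l Y → ∀ P ∈ Y, ∃ X, (IsAlgebraicSet n l X ∧ IsIrreducibleAlg n l X) ∧
      X ⊆ Y ∧ P ∈ X := by
  induction Y using WellFoundedLT.induction with
  | ind Y ih =>
    intro hY P hP
    by_cases hi : IsIrreducibleAlg n l Y
    · exact ⟨Y, ⟨hY, hi⟩, subset_rfl, hP⟩
    · unfold IsIrreducibleAlg at hi
      push Not at hi
      obtain ⟨m, Z, hZ, hU, hne⟩ := hi
      have hP' := hP
      rw [hU] at hP'
      obtain ⟨i, hPi⟩ := Set.mem_iUnion.1 hP'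
      have hsub : Z i ⊆ Y := by rw [hU]; exact Set.subset_iUnion Z i
      obtain ⟨X, hX, hXZ, hPX⟩ := ih (Z i) (lt_of_le_of_ne hsub (hne i).symm) (hZ i) P hPi
      exact ⟨X, hX, hXZ.trans hsub, hPX⟩

/-- Let n, l ≥ 1. Every algebraic set `Y ⊆ (Fin n → Fin l)` is a finite union
`Y = Y₁ ∪ … ∪ Yₘ` of irreducible algebraic sets with `Yᵢ ⊄ Yⱼ` for all i ≠ j, and this
decomposition is unique up to a permutation of the components: any other such union of
irreducible algebraic sets pairwise not contained in one another gives the same collection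
of sets. -/
theorem stmt_11 (n l : ℕ) (hn : 1 ≤ n) (hl : 1 ≤ l) (Y : Set (Fin n → Fin l))
    (hY : IsAlgebraicSet n l Y) :
    ∃ (m : ℕ) (Ys : Fin m → Set (Fin n → Fin l)),
      (∀ i, IsAlgebraicSet n l (Ys i) ∧ IsIrreducibleAlg n l (Ys i)) ∧
      (∀ i j, i ≠ j → ¬ Ys i ⊆ Ys j) ∧
      Y = ⋃ i, Ys i ∧
      (∀ (k : ℕ) (Z : Fin k → Set (Fin n → Fin l)),
        (∀ i, IsAlgebraicSet n l (Z i) ∧ IsIrreducibleAlg n l (Z i)) →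
        (∀ i j, i ≠ j → ¬ Z i ⊆ Z j) →
        Y = ⋃ i, Z i →
        Set.range Z = Set.range Ys) := by
  classical
  let S : Set (Set (Fin n → Fin l)) :=
    {X | (IsAlgebraicSet n l X ∧ IsIrreducibleAlg n l X) ∧ X ⊆ Y}
  let M : Set (Set (Fin n → Fin l)) := {X | Maximal (· ∈ S) X}
  have hmax : ∀ X ∈ S, ∃ W ∈ M, X ⊆ W := by
    intro X hX
    obtain ⟨W, hXW, hW⟩ := (Set.toFinite S).exists_le_maximal hX
    exact ⟨W, hW, hXW⟩
  obtain ⟨m, Ys, hinj, hr⟩ : ∃ (m : ℕ) (Ys : Fin m → Set (Fin n → Fin l)),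
      Function.Injective Ys ∧ Set.range Ys = M := by
    let e := Finite.equivFin M
    refine ⟨Nat.card M, fun i => (e.symm i : Set (Fin n → Fin l)),
      Subtype.val_injective.comp e.symm.injective, ?_⟩
    ext X
    constructor
    · rintro ⟨i, rfl⟩
      exact (e.symm i).2
    · intro hX
      exact ⟨e ⟨X, hX⟩, congrArg Subtype.val (e.symm_apply_apply ⟨X, hX⟩)⟩
  have hm : ∀ i, Ys i ∈ M := fun i => hr ▸ Set.mem_range_self i
  refine ⟨m, Ys, fun i => (hm i).prop.1, ?_, ?_, ?_⟩
  · intro i j hij hs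
    exact hij (hinj ((hm i).eq_of_le (hm j).prop hs))
  · apply Set.Subset.antisymm
    · intro P hP
      obtain ⟨X, hX, hXY, hPX⟩ := exists_irreducible_mem Y hY P hP
      obtain ⟨W, hW, hXW⟩ := hmax X ⟨hX, hXY⟩
      rw [← hr] at hW
      obtain ⟨i, rfl⟩ := hW
      exact Set.mem_iUnion.2 ⟨i, hXW hPX⟩
    · exact Set.iUnion_subset fun i => (hm i).prop.2
  · intro k Z hZ hZn hU
    rw [hr]
    have hZS : ∀ i, Z i ∈ S := fun i => ⟨hZ i, by rw [hU]; exact Set.subset_iUnion Z i⟩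
    have hMZ : ∀ W ∈ M, ∃ j, W ⊆ Z j := fun W hW =>
      hW.prop.1.2.exists_subset hW.prop.1.1 Z (fun i => (hZ i).1) (hU ▸ hW.prop.2)
    apply Set.Subset.antisymm
    · rintro _ ⟨i, rfl⟩
      obtain ⟨W, hW, hs⟩ := hmax _ (hZS i)
      obtain ⟨j, hj⟩ := hMZ W hW
      have hij : i = j := by
        by_contra hne
        exact hZn i j hne (hs.trans hj)
      subst hij
      rw [Set.Subset.antisymm hs hj]
      exact hW
    · intro W hW
      obtain ⟨j, hj⟩ := hMZ W hW
      exact ⟨j, (hW.eq_of_le (hZS j) hj).symm⟩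
end

section
/- Let 1 ≤ n ≤ l and let σ be a permutation of Fin n, and set Y_σ = {P : Fin n → Fin l | P(σ(1)) ≤ P(σ(2)) ≤ … ≤ P(σ(n))}. Define an equivalence relation on nonempty subsets of Fin n by A ∼ B iff min_{i∈A} P(i) = min_{j∈B} P(j) for every P ∈ Y_σ. Then ∼ has exactly n equivalence classes; equivalently, the coordinate semilattice Γ(Y_σ) has exactly n elements. -/
/-- Terms in n variables over a linearly ordered semilattice are identified with nonempty
subsets of `Fin n`; the term `A` evaluates at a point `P : Fin n → Fin l` to
`min_{i ∈ A} P i`.  Two terms are equivalent over a set `Y` of points when they take equal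
values at every point of `Y`; the coordinate semilattice `Γ(Y)` is the quotient of the set
of terms by this relation. -/
def coordSetoid (n l : ℕ) (Y : Set (Fin n → Fin l)) :
    Setoid {A : Finset (Fin n) // A.Nonempty} :=
  ⟨fun A B => ∀ P ∈ Y, A.1.inf' A.2 P = B.1.inf' B.2 P,
   ⟨fun _ _ _ => rfl,
    fun h P hP => (h P hP).symm,
    fun h1 h2 P hP => (h1 P hP).trans (h2 P hP)⟩⟩

/-- Let 1 ≤ n ≤ l and let σ be a permutation of `Fin n`, and set
`Y_σ = {P : Fin n → Fin l | P(σ(1)) ≤ P(σ(2)) ≤ … ≤ P(σ(n))}`. Define an equivalence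
relation on nonempty subsets of `Fin n` by `A ∼ B` iff `min_{i∈A} P i = min_{j∈B} P j` for
every `P ∈ Y_σ`. Then `∼` has exactly n equivalence classes; equivalently, the coordinate
semilattice `Γ(Y_σ)` has exactly n elements. -/
theorem stmt_12 (n l : ℕ) (hn : 1 ≤ n) (hnl : n ≤ l) (σ : Equiv.Perm (Fin n)) :
    Nat.card (Quotient (coordSetoid n l {P : Fin n → Fin l | Monotone fun i => P (σ i)}))
      = n := by
  have hb : Function.Bijective (fun i : Fin n =>
      (Quotient.mk (coordSetoid n l {P : Fin n → Fin l | Monotone fun i => P (σ i)})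
        ⟨{σ i}, Finset.singleton_nonempty _⟩)) := by
    constructor
    · intro i j hij
      have h := Quotient.exact hij
      have h2 := h (fun x => Fin.castLE hnl (σ.symm x)) (by
        intro a b hab
        simpa using hab)
      simpa using h2
    · intro q
      induction q using Quotient.inductionOn with
      | h A =>
        obtain ⟨a, ha, hmin⟩ := Finset.exists_min_image A.1 σ.symm A.2
        refine ⟨σ.symm a, Quotient.sound ?_⟩
        intro P hP
        have hP' : Monotone fun i => P (σ i) := hP
        apply le_antisymm
        · apply Finset.le_inf'
          intro b hb
          have := hP' (hmin b hb)
          simpa using this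
        · simpa using ⟨a, ha, le_refl (P a)⟩
  rw [← Nat.card_eq_of_bijective _ hb, Nat.card_fin]
end

section
/- Let 2 ≤ n ≤ l and let σ be a permutation of Fin n, and set Y_σ = {P : Fin n → Fin l | P(σ(1)) = P(σ(2)) ≤ P(σ(3)) ≤ … ≤ P(σ(n))}. Define an equivalence relation on nonempty subsets of Fin n by A ∼ B iff min_{i∈A} P(i) = min_{j∈B} P(j) for every P ∈ Y_σ. Then ∼ has exactly n − 1 equivalence classes; equivalently, the coordinate semilattice Γ(Y_σ) has exactly n − 1 elements. -/
/-- Let 2 ≤ n ≤ l and let σ be a permutation of `Fin n`, and set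
`Y_σ = {P : Fin n → Fin l | P(σ(1)) = P(σ(2)) ≤ P(σ(3)) ≤ … ≤ P(σ(n))}`. Define an
equivalence relation on nonempty subsets of `Fin n` by `A ∼ B` iff
`min_{i∈A} P i = min_{j∈B} P j` for every `P ∈ Y_σ`. Then `∼` has exactly n − 1 equivalence
classes; equivalently, the coordinate semilattice `Γ(Y_σ)` has exactly n − 1 elements.
(Positions 1 and 2 are the indices `0, 1 : Fin n`.) -/
theorem stmt_13 (n l : ℕ) [NeZero n] (hn : 2 ≤ n) (hnl : n ≤ l) (σ : Equiv.Perm (Fin n)) :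
    Nat.card (Quotient (coordSetoid n l
      {P : Fin n → Fin l | P (σ 0) = P (σ 1) ∧ Monotone fun i => P (σ i)}))
      = n - 1 := by
  have h1 : ((1 : Fin n) : ℕ) = 1 := by
    rw [Fin.val_one']; exact Nat.mod_eq_of_lt (by omega)
  let Q : Fin n → Fin l := fun i => ⟨((σ.symm i : Fin n) : ℕ) - 1, by omega⟩
  have hQ : Q ∈ {P : Fin n → Fin l | P (σ 0) = P (σ 1) ∧ Monotone fun i => P (σ i)} := by
    refine ⟨?_, ?_⟩
    · simp [Q, Nat.mod_eq_of_lt (show 1 < n by omega)]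
    · intro i j hij
      have : (i : ℕ) ≤ j := hij
      simp only [Q, Equiv.symm_apply_apply, Fin.mk_le_mk]
      omega
  let F : Fin (n - 1) → Quotient (coordSetoid n l
      {P : Fin n → Fin l | P (σ 0) = P (σ 1) ∧ Monotone fun i => P (σ i)}) :=
    fun k => Quotient.mk _ ⟨{σ ⟨k + 1, by omega⟩}, Finset.singleton_nonempty _⟩
  have hF : Function.Bijective F := by
    constructor
    · intro j k hjk
      have h := Quotient.exact hjk Q hQ
      simp only [Finset.inf'_singleton, Q, Equiv.symm_apply_apply, Fin.mk.injEq] at h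
      apply Fin.ext
      omega
    · intro q
      induction q using Quotient.inductionOn with
      | h A =>
        obtain ⟨a, ha, hAa⟩ := Finset.exists_mem_eq_inf' A.2 Q
        have hmin : ∀ b ∈ A.1, ((σ.symm a : Fin n) : ℕ) - 1 ≤ ((σ.symm b : Fin n) : ℕ) - 1 := by
          intro b hb
          have h : Q a ≤ Q b := hAa ▸ Finset.inf'_le Q hb
          exact h
        refine ⟨⟨((σ.symm a : Fin n) : ℕ) - 1, by omega⟩, Quotient.sound ?_⟩
        intro P hP
        obtain ⟨hP1, hP2⟩ := hP
        -- the value of `P` at an index only depends on its truncated position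
        have key : ∀ b : Fin n, ∀ h : ((σ.symm b : Fin n) : ℕ) - 1 + 1 < n,
            P (σ ⟨((σ.symm b : Fin n) : ℕ) - 1 + 1, h⟩) = P b := by
          intro b h
          by_cases hb : ((σ.symm b : Fin n) : ℕ) = 0
          · have e1 : (⟨((σ.symm b : Fin n) : ℕ) - 1 + 1, h⟩ : Fin n) = 1 := by
              apply Fin.ext; simp only [h1]; omega
            have e0 : σ.symm b = 0 := by apply Fin.ext; simpa using hb
            rw [e1, ← hP1, ← e0, Equiv.apply_symm_apply]
          · have e : (⟨((σ.symm b : Fin n) : ℕ) - 1 + 1, h⟩ : Fin n) = σ.symm b := by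
              apply Fin.ext; simp only; omega
            rw [e, Equiv.apply_symm_apply]
        simp only [Finset.inf'_singleton]
        rw [key a]
        apply le_antisymm
        · apply Finset.le_inf'
          intro b hb
          rw [← key a (by omega), ← key b (by omega)]
          apply hP2
          have := hmin b hb
          rw [Fin.mk_le_mk]
          omega
        · exact Finset.inf'_le P ha
  rw [← Nat.card_eq_of_bijective F hF, Nat.card_fin]
end

section
/- For every natural number n ≥ 2, ∑_{(k1,k2)} (n choose k1) · ((n − k1) choose k2) · [(n − k1 − k2) · (n−1)! + k1 · k2 · (n−2)!] = 4 · n! · 3^{n−2}, where the sum ranges over all pairs (k1, k2) of natural numbers with k1 + k2 ≤ n and (k1, k2) ∉ {(0, n), (n, 0)}. -/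
lemma sum_choose_ext (N M : ℕ) (h : N < M) : ∑ k ∈ Finset.range M, N.choose k = 2 ^ N := by
  rw [← Nat.sum_range_choose]
  symm
  apply Finset.sum_subset
  · intro x hx
    simp only [Finset.mem_range] at *
    omega
  · intro x _ hx
    simp only [Finset.mem_range] at hx
    exact Nat.choose_eq_zero_of_lt (by omega)

lemma sum_choose_sub (N M : ℕ) (h : N < M) :
    ∑ k ∈ Finset.range M, N.choose k * (N - k) = N * 2 ^ (N - 1) := by
  cases N with
  | zero => simp
  | succ N =>
    rw [Nat.add_sub_cancel, ← sum_choose_ext N M (by omega), Finset.mul_sum]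
    refine Finset.sum_congr rfl fun k _ => ?_
    rw [← Nat.choose_mul_succ_eq, mul_comm]

lemma sum_choose_id (N M : ℕ) (h : N < M) :
    ∑ k ∈ Finset.range M, N.choose k * k = N * 2 ^ (N - 1) := by
  cases N with
  | zero =>
    refine Finset.sum_eq_zero fun k _ => ?_
    cases k <;> simp
  | succ N =>
    obtain ⟨M, rfl⟩ : ∃ M', M = M' + 1 := ⟨M - 1, by omega⟩
    rw [Nat.add_sub_cancel, ← sum_choose_ext N M (by omega), Finset.mul_sum,
      Finset.sum_range_succ']
    simp only [mul_zero, add_zero]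
    refine Finset.sum_congr rfl fun k _ => ?_
    rw [← Nat.add_one_mul_choose_eq]

lemma sum_choose_two_pow (N : ℕ) :
    ∑ k ∈ Finset.range (N + 1), N.choose k * 2 ^ (N - k) = 3 ^ N := by
  have h := add_pow (1 : ℕ) 2 N
  norm_num at h
  rw [h]
  exact Finset.sum_congr rfl fun k _ => mul_comm _ _

lemma sum_outer (N : ℕ) :
    ∑ k ∈ Finset.range (N + 2), (N + 1).choose k * ((N + 1 - k) * 2 ^ (N + 1 - k - 1))
      = (N + 1) * 3 ^ N := by
  rw [Finset.sum_range_succ, ← sum_choose_two_pow, Finset.mul_sum]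
  simp only [Nat.sub_self, zero_mul, mul_zero, add_zero]
  refine Finset.sum_congr rfl fun k _ => ?_
  rw [← mul_assoc, ← Nat.choose_mul_succ_eq, show N + 1 - k - 1 = N - k by omega]
  ring

lemma sum_outer_id (N : ℕ) :
    ∑ k ∈ Finset.range (N + 3), (N + 2).choose k * (k * ((N + 2 - k) * 2 ^ (N + 2 - k - 1)))
      = (N + 2) * ((N + 1) * 3 ^ N) := by
  rw [Finset.sum_range_succ', ← sum_outer, Finset.mul_sum]
  simp only [zero_mul, mul_zero, add_zero]
  refine Finset.sum_congr rfl fun k _ => ?_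
  rw [← mul_assoc, ← Nat.add_one_mul_choose_eq, show N + 2 - (k + 1) = N + 1 - k by omega]
  ring

/-- For every natural number n ≥ 2,
`∑_{(k1,k2)} (n choose k1) · ((n − k1) choose k2) · [(n − k1 − k2) · (n−1)! + k1 · k2 · (n−2)!]
  = 4 · n! · 3^{n−2}`,
where the sum ranges over all pairs (k1, k2) of natural numbers with k1 + k2 ≤ n and
(k1, k2) ∉ {(0, n), (n, 0)}. -/
theorem stmt_18 (n : ℕ) (hn : 2 ≤ n) :
    ∑ p ∈ (Finset.range (n + 1) ×ˢ Finset.range (n + 1)).filter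
        (fun p => p.1 + p.2 ≤ n ∧ p ≠ (0, n) ∧ p ≠ (n, 0)),
      n.choose p.1 * (n - p.1).choose p.2 *
        ((n - p.1 - p.2) * (n - 1).factorial + p.1 * p.2 * (n - 2).factorial)
      = 4 * n.factorial * 3 ^ (n - 2) := by
  obtain ⟨m, rfl⟩ : ∃ m, n = m + 2 := ⟨n - 2, by omega⟩
  rw [Finset.sum_filter_of_ne, Finset.sum_product]
  · have key : ∀ k ∈ Finset.range (m + 2 + 1), ∑ j ∈ Finset.range (m + 2 + 1),
        (m + 2).choose k * (m + 2 - k).choose j *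
          ((m + 2 - k - j) * (m + 2 - 1).factorial + k * j * (m + 2 - 2).factorial)
        = (m + 1).factorial * ((m + 2).choose k * ((m + 2 - k) * 2 ^ (m + 2 - k - 1)))
          + m.factorial *
            ((m + 2).choose k * (k * ((m + 2 - k) * 2 ^ (m + 2 - k - 1)))) := by
      intro k _
      have h1 := sum_choose_sub (m + 2 - k) (m + 2 + 1) (by omega)
      have h2 := sum_choose_id (m + 2 - k) (m + 2 + 1) (by omega)
      nth_rewrite 1 [← h1]
      rw [← h2]
      simp only [Finset.mul_sum, ← Finset.sum_add_distrib]
      refine Finset.sum_congr rfl fun j _ => ?_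
      rw [show m + 2 - 1 = m + 1 by omega, show m + 2 - 2 = m by omega]
      ring
    dsimp only
    rw [Finset.sum_congr rfl key, Finset.sum_add_distrib, ← Finset.mul_sum, ← Finset.mul_sum,
      sum_outer_id, sum_outer (m + 1), show m + 2 - 2 = m by omega]
    simp only [Nat.factorial_succ]
    ring
  · rintro ⟨a, b⟩ hab hne
    simp only [Finset.mem_product, Finset.mem_range] at hab
    refine ⟨?_, ?_, ?_⟩
    · by_contra hlt
      apply hne
      dsimp only at hlt ⊢
      rw [Nat.choose_eq_zero_of_lt (show m + 2 - a < b by omega)]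
      simp
    · intro h
      rw [h] at hne
      simp at hne
    · intro h
      rw [h] at hne
      simp at hne
end
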